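/- Let n ≥ 0, let E = EuclideanSpace ℝ (Fin (n+1)), let W = ℝ × E × ℝ, and let Q be the quadratic form Q(λ, x, s) = 2λs + ‖x‖² on W. For any two vectors v, w ∈ W with Q(v) = 1 and Q(w) = 1, there exists a linear equivalence f : W ≃ W with Q(f(z)) = Q(z) for all z ∈ W and f(v) = w. (Hence the Möbius group acts transitively on the set of unit spacelike vectors, i.e. on the set of oriented hyperspheres of the conformal sphere.) -/

import Mathlib

/-- The Minkowski quadratic form `Q(λ, x, s) = 2λs + ‖x‖²` on `W = ℝ × E × ℝ`. -/
noncomputable def minkQ11 (n : ℕ) (w : ℝ × EuclideanSpace ℝ (Fin (n + 1)) × ℝ) : ℝ :=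
  2 * w.1 * w.2.2 + ‖w.2.1‖ ^ 2

namespace LinearMap.BilinForm

variable {K V : Type*} [Field K] [AddCommGroup V] [Module K V]

/-- The reflection in the hyperplane orthogonal to `v - w` is an isometry that exchanges two
vectors `v` and `w` of the same length, provided `v - w` is not isotropic. -/
theorem exists_isometry_apply_eq_of_sub_ne_zero {B : LinearMap.BilinForm K V} (hB : B.IsSymm) {v w : V}
    (h : B v v = B w w) (hne : B (v - w) (v - w) ≠ 0) :
    ∃ f : V ≃ₗ[K] V, (∀ z, B (f z) (f z) = B z z) ∧ f v = w := by
  set u := v - w with hu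
  have hself : ((2 / B u u) • B u) u = 2 := by
    simp [hne]
  refine ⟨Module.reflection hself, fun z => ?_, ?_⟩
  · have hzu : B z u = B u z := hB.eq z u
    simp only [Module.reflection_apply, map_sub, map_smul, LinearMap.sub_apply,
      LinearMap.smul_apply, smul_eq_mul, hzu]
    field_simp
    ring
  · have huv : 2 * B u v = B u u := by
      have hwv : B w v = B v w := hB.eq w v
      simp only [hu, map_sub, LinearMap.sub_apply, hwv, h]
      ring
    have hcoef : (2 / B u u) * B u v = 1 := by
      rw [div_mul_eq_mul_div, huv, div_self hne]
    rw [Module.reflection_apply, LinearMap.smul_apply, smul_eq_mul, hcoef, one_smul, hu,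
      sub_sub_cancel]

/-- The isometries of a symmetric bilinear form act transitively on the vectors of a given nonzero
length. -/
theorem exists_isometry_apply_eq {B : LinearMap.BilinForm K V} [NeZero (2 : K)] (hB : B.IsSymm) {v w : V}
    (h : B v v = B w w) (hv : B v v ≠ 0) :
    ∃ f : V ≃ₗ[K] V, (∀ z, B (f z) (f z) = B z z) ∧ f v = w := by
  by_cases hsub : B (v - w) (v - w) = 0
  · have hadd : B (v - -w) (v - -w) ≠ 0 := by
      intro hadd
      have hsum : B (v - w) (v - w) + B (v - -w) (v - -w) = 2 * 2 * B v v := by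
        simp only [map_sub, map_neg, LinearMap.sub_apply, LinearMap.neg_apply, ← h]
        ring
      rw [hsub, hadd, add_zero] at hsum
      exact mul_ne_zero (mul_ne_zero two_ne_zero two_ne_zero) hv hsum.symm
    obtain ⟨f, hf, hfv⟩ := exists_isometry_apply_eq_of_sub_ne_zero hB (w := -w) (by simpa using h)
      hadd
    exact ⟨f.trans (LinearEquiv.neg K), fun z => by simp [hf], by simp [hfv]⟩
  · exact exists_isometry_apply_eq_of_sub_ne_zero hB h hsub

end LinearMap.BilinForm

/-- The polar form of the Minkowski quadratic form, normalized so that its diagonal is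
`minkQ11 n`. -/
noncomputable def minkBilin (n : ℕ) :
    LinearMap.BilinForm ℝ (ℝ × EuclideanSpace ℝ (Fin (n + 1)) × ℝ) :=
  LinearMap.mk₂ ℝ (fun y z => y.1 * z.2.2 + y.2.2 * z.1 + inner ℝ y.2.1 z.2.1)
    (fun _ _ _ => by simp only [Prod.fst_add, Prod.snd_add, inner_add_left]; ring)
    (fun _ _ _ => by
      simp only [Prod.smul_fst, Prod.smul_snd, real_inner_smul_left, smul_eq_mul]; ring)
    (fun _ _ _ => by simp only [Prod.fst_add, Prod.snd_add, inner_add_right]; ring)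
    (fun _ _ _ => by
      simp only [Prod.smul_fst, Prod.smul_snd, real_inner_smul_right, smul_eq_mul]; ring)

theorem minkBilin_isSymm (n : ℕ) : (minkBilin n).IsSymm where
  eq y z := by
    simp only [minkBilin, LinearMap.mk₂_apply, real_inner_comm y.2.1]
    ring

theorem minkBilin_self (n : ℕ) (z : ℝ × EuclideanSpace ℝ (Fin (n + 1)) × ℝ) :
    minkBilin n z z = minkQ11 n z := by
  simp only [minkBilin, LinearMap.mk₂_apply, minkQ11, real_inner_self_eq_norm_sq]
  ring

/-- the orthogonal group of the Minkowski form acts transitively on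
unit spacelike vectors (i.e. on the oriented hyperspheres of the conformal sphere). -/
theorem stmt_11 (n : ℕ) (v w : ℝ × EuclideanSpace ℝ (Fin (n + 1)) × ℝ)
    (hQv : minkQ11 n v = 1) (hQw : minkQ11 n w = 1) :
    ∃ f : (ℝ × EuclideanSpace ℝ (Fin (n + 1)) × ℝ) ≃ₗ[ℝ]
        (ℝ × EuclideanSpace ℝ (Fin (n + 1)) × ℝ),
      (∀ z : ℝ × EuclideanSpace ℝ (Fin (n + 1)) × ℝ, minkQ11 n (f z) = minkQ11 n z) ∧
      f v = w := by
  have h : minkBilin n v v = minkBilin n w w := by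
    rw [minkBilin_self, minkBilin_self, hQv, hQw]
  have hv : minkBilin n v v ≠ 0 := by
    rw [minkBilin_self, hQv]
    exact one_ne_zero
  obtain ⟨f, hf, hfv⟩ := LinearMap.BilinForm.exists_isometry_apply_eq (minkBilin_isSymm n) h hv
  exact ⟨f, fun z => by rw [← minkBilin_self, hf, minkBilin_self], hfv⟩
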